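/- arXiv:1509.05975 — 2 statements merged into one kernel-verified Lean document; each statement's English description precedes it below -/
import Mathlib

section
/- Let A, ΔA : ℝⁿ → ℝᵐ be linear maps (m × n real matrices) with A ≠ 0, Ã = A + ΔA, B̃ = ÃᵀÃ, and α > 0. Suppose y ∈ ℝⁿ with y ≠ 0, f, Δf ∈ ℝᵐ, Δy_α ∈ ℝⁿ satisfy Ay = f with f ≠ 0 and (αI + B̃)(y + Δy_α) = Ãᵀ(f + Δf). Then, with δ_rel = ‖Δf‖/‖f‖, ξ_rel = ‖ΔA‖/‖A‖, η = δ_rel + ξ_rel, and μ_min the smallest eigenvalue of the symmetric positive-semidefinite matrix B̃, the relative error satisfies ‖Δy_α‖/‖y‖ ≤ (‖A‖/(2√α))·η + α/(α + μ_min). -/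
open ContinuousLinearMap

/-!
The error `d = Δyα` satisfies `(α + T†T) d = T† r - α y` with `T = Ã` and `r = Δf - ΔA y`. Pairing
with `d` gives `α ‖d‖² + ‖T d‖² ≤ ‖r‖ ‖T d‖ + α ‖y‖ ‖d‖`, and together with `μ ‖d‖² ≤ ‖T d‖²` this
scalar inequality already implies `‖d‖ ≤ ‖r‖ / (2√α) + α ‖y‖ / (α + μ)`, so that no bound on the
resolvent of `T†T` enters.
-/

open scoped InnerProductSpace

section SmallestEigenvalue

variable {𝕜 E F : Type*} [RCLike 𝕜] [NormedAddCommGroup E] [InnerProductSpace 𝕜 E]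

theorem sInf_eigenvalues_mul_norm_sq_le_re_inner [FiniteDimensional 𝕜 E] {T : E →ₗ[𝕜] E}
    (hT : T.IsSymmetric) (x : E) :
    sInf {μ : ℝ | Module.End.HasEigenvalue T (μ : 𝕜)} * ‖x‖ ^ 2 ≤ RCLike.re ⟪x, T x⟫_𝕜 := by
  have eigenvalues_bddBelow : BddBelow {μ : ℝ | Module.End.HasEigenvalue T (μ : 𝕜)} :=
    ((Module.End.finite_hasEigenvalue T).preimage RCLike.ofReal_injective.injOn).bddBelow
  let v := hT.eigenvectorBasis rfl
  have re_inner_eq : RCLike.re ⟪x, T x⟫_𝕜 = ∑ i, hT.eigenvalues rfl i * ‖⟪v i, x⟫_𝕜‖ ^ 2 := by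
    rw [← v.sum_inner_mul_inner x (T x), map_sum]
    refine Finset.sum_congr rfl fun i _ => ?_
    rw [← hT, hT.apply_eigenvectorBasis, inner_smul_left, RCLike.conj_ofReal, mul_left_comm,
      RCLike.re_ofReal_mul, inner_mul_symm_re_eq_norm, norm_mul, norm_inner_symm, sq]
  rw [re_inner_eq, ← v.sum_sq_norm_inner_right x, Finset.mul_sum]
  gcongr with i
  exact csInf_le eigenvalues_bddBelow (hT.hasEigenvalue_eigenvalues rfl i)

variable [CompleteSpace E] [NormedAddCommGroup F] [InnerProductSpace 𝕜 F] [CompleteSpace F]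

theorem sInf_eigenvalues_adjoint_comp_self_nonneg (T : E →L[𝕜] F) :
    0 ≤ sInf {μ : ℝ | Module.End.HasEigenvalue (T.adjoint ∘L T : E →ₗ[𝕜] E) (μ : 𝕜)} :=
  Real.sInf_nonneg fun _ hμ =>
    eigenvalue_nonneg_of_nonneg hμ (isPositive_adjoint_comp_self T).re_inner_nonneg_right

theorem sInf_eigenvalues_adjoint_comp_self_mul_norm_sq_le [FiniteDimensional 𝕜 E]
    (T : E →L[𝕜] F) (x : E) :
    sInf {μ : ℝ | Module.End.HasEigenvalue (T.adjoint ∘L T : E →ₗ[𝕜] E) (μ : 𝕜)} * ‖x‖ ^ 2 ≤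
      ‖T x‖ ^ 2 :=
  (sInf_eigenvalues_mul_norm_sq_le_re_inner (isPositive_adjoint_comp_self T).isSymmetric x).trans_eq
    (apply_norm_sq_eq_inner_adjoint_right T x).symm

end SmallestEigenvalue

section Tikhonov

variable {𝕜 E F : Type*} [RCLike 𝕜]
  [NormedAddCommGroup E] [InnerProductSpace 𝕜 E] [NormedAddCommGroup F] [InnerProductSpace 𝕜 F]

/-- `x` is the Tikhonov-regularized solution of `T x = g` with parameter `α`. The normal equation
`(α + T†T) x = T† g` is stated weakly, tested against all `z`, so that it makes sense in spaces in
which `T` need not have an adjoint. -/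
def IsTikhonovSolution (T : E →ₗ[𝕜] F) (α : ℝ) (g : F) (x : E) : Prop :=
  ∀ z, (α : 𝕜) * ⟪x, z⟫_𝕜 + ⟪T x, T z⟫_𝕜 = ⟪g, T z⟫_𝕜

theorem isTikhonovSolution_iff_normal_equation [CompleteSpace E] [CompleteSpace F]
    {T : E →L[𝕜] F} {α : ℝ} {g : F} {x : E} :
    IsTikhonovSolution (T : E →ₗ[𝕜] F) α g x ↔ (α : 𝕜) • x + T.adjoint (T x) = T.adjoint g := by
  rw [ext_iff_inner_right 𝕜]
  simp only [IsTikhonovSolution, coe_coe, inner_add_left, inner_smul_left, RCLike.conj_ofReal,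
    adjoint_inner_left]

theorem IsTikhonovSolution.energy_eq {T : E →ₗ[𝕜] F} {α : ℝ} {g : F} {y d : E}
    (h : IsTikhonovSolution T α g (y + d)) :
    α * ‖d‖ ^ 2 + ‖T d‖ ^ 2 = RCLike.re ⟪g - T y, T d⟫_𝕜 - α * RCLike.re ⟪y, d⟫_𝕜 := by
  have tested_at_error := congrArg RCLike.re (h d)
  simp only [map_add, inner_add_left, RCLike.re_ofReal_mul, inner_self_eq_norm_sq]
    at tested_at_error
  rw [inner_sub_left, map_sub]
  linarith

theorem IsTikhonovSolution.energy_le {T : E →ₗ[𝕜] F} {α : ℝ} {g : F} {y d : E}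
    (h : IsTikhonovSolution T α g (y + d)) (hα : 0 ≤ α) :
    α * ‖d‖ ^ 2 + ‖T d‖ ^ 2 ≤ ‖g - T y‖ * ‖T d‖ + α * (‖y‖ * ‖d‖) := by
  have residual_term := re_inner_le_norm (𝕜 := 𝕜) (g - T y) (T d)
  have bias_term : -RCLike.re ⟪y, d⟫_𝕜 ≤ ‖y‖ * ‖d‖ := by
    simpa only [inner_neg_left, map_neg, norm_neg] using re_inner_le_norm (𝕜 := 𝕜) (-y) d
  linarith [h.energy_eq, mul_le_mul_of_nonneg_left bias_term hα]

/- With `c = r / (2√α) < s`, the inequality follows by adding `(s - c) (t² - μ s²) ≥ 0`,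
`c (t - √α s)² ≥ 0` and `s` times the energy inequality. -/
theorem le_div_two_sqrt_add_of_energy_le {α μ r b s t : ℝ} (hα : 0 < α) (hαμ : 0 < α + μ)
    (hr : 0 ≤ r) (hb : 0 ≤ b) (hμ : μ * s ^ 2 ≤ t ^ 2)
    (henergy : α * s ^ 2 + t ^ 2 ≤ r * t + α * (b * s)) :
    s ≤ r / (2 * √α) + α * b / (α + μ) := by
  obtain ⟨c, hc⟩ : ∃ c, c = r / (2 * √α) := ⟨_, rfl⟩
  have c_nonneg : 0 ≤ c := by rw [hc]; positivity
  have r_eq : r = 2 * √α * c := by rw [hc]; field_simp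
  rw [← hc, ← sub_le_iff_le_add', le_div_iff₀ hαμ]
  rcases le_or_gt s c with hsc | hcs
  · calc (s - c) * (α + μ) ≤ 0 := mul_nonpos_of_nonpos_of_nonneg (sub_nonpos.mpr hsc) hαμ.le
      _ ≤ α * b := by positivity
  · have s_pos : 0 < s := c_nonneg.trans_lt hcs
    have cross_term : c * (2 * √α * s * t) ≤ c * (α * s ^ 2 + t ^ 2) := by
      gcongr
      nlinarith [sq_nonneg (t - √α * s), Real.sq_sqrt hα.le]
    refine le_of_mul_le_mul_right ?_ (pow_pos s_pos 2)
    calc (s - c) * (α + μ) * s ^ 2 = (s - c) * (α * s ^ 2 + μ * s ^ 2) := by ring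
      _ ≤ (s - c) * (α * s ^ 2 + t ^ 2) := by
        have := sub_nonneg.mpr hcs.le
        gcongr
      _ = s * (α * s ^ 2 + t ^ 2) - c * (α * s ^ 2 + t ^ 2) := by ring
      _ ≤ s * (r * t + α * (b * s)) - c * (2 * √α * s * t) := by gcongr
      _ = α * b * s ^ 2 := by rw [r_eq]; ring

theorem IsTikhonovSolution.norm_error_le {T : E →ₗ[𝕜] F} {α μ : ℝ} {g : F} {y d : E}
    (h : IsTikhonovSolution T α g (y + d)) (hα : 0 < α) (hαμ : 0 < α + μ)
    (hμ : μ * ‖d‖ ^ 2 ≤ ‖T d‖ ^ 2) :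
    ‖d‖ ≤ ‖g - T y‖ / (2 * √α) + α * ‖y‖ / (α + μ) :=
  le_div_two_sqrt_add_of_energy_le hα hαμ (norm_nonneg _) (norm_nonneg _) hμ (h.energy_le hα.le)

theorem norm_perturbed_residual_le {A ΔA : E →L[𝕜] F} {y : E} {f Δf : F}
    (hf : f ≠ 0) (hyf : A y = f) :
    ‖f + Δf - (A + ΔA) y‖ ≤ ‖A‖ * (‖Δf‖ / ‖f‖ + ‖ΔA‖ / ‖A‖) * ‖y‖ := by
  have f_pos : 0 < ‖f‖ := norm_pos_iff.mpr hf
  have f_le : ‖f‖ ≤ ‖A‖ * ‖y‖ := hyf ▸ A.le_opNorm y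
  have A_pos : 0 < ‖A‖ := pos_of_mul_pos_left (f_pos.trans_le f_le) (norm_nonneg y)
  calc ‖f + Δf - (A + ΔA) y‖ = ‖Δf - ΔA y‖ := by
        rw [add_apply, hyf, add_sub_add_left_eq_sub]
    _ ≤ ‖Δf‖ + ‖ΔA‖ * ‖y‖ := (norm_sub_le _ _).trans (by gcongr; exact ΔA.le_opNorm y)
    _ = ‖f‖ * (‖Δf‖ / ‖f‖) + ‖ΔA‖ * ‖y‖ := by rw [mul_div_cancel₀ _ f_pos.ne']
    _ ≤ ‖A‖ * ‖y‖ * (‖Δf‖ / ‖f‖) + ‖ΔA‖ * ‖y‖ := by gcongr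
    _ = ‖A‖ * (‖Δf‖ / ‖f‖ + ‖ΔA‖ / ‖A‖) * ‖y‖ := by field_simp

theorem tikhonov_relative_error_bound_euclidean_general {A ΔA : E →L[𝕜] F} {α μ : ℝ}
    (hα : 0 < α) (hαμ : 0 < α + μ) (hμ : ∀ x, μ * ‖x‖ ^ 2 ≤ ‖(A + ΔA) x‖ ^ 2)
    {y Δyα : E} {f Δf : F} (hf : f ≠ 0) (hyf : A y = f)
    (hreg : IsTikhonovSolution (A + ΔA : E →L[𝕜] F).toLinearMap α (f + Δf) (y + Δyα)) :
    ‖Δyα‖ / ‖y‖ ≤ ‖A‖ / (2 * √α) * (‖Δf‖ / ‖f‖ + ‖ΔA‖ / ‖A‖) + α / (α + μ) := by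
  have y_pos : 0 < ‖y‖ := norm_pos_iff.mpr fun hy => hf (by rw [← hyf, hy, map_zero])
  rw [div_le_iff₀ y_pos]
  calc ‖Δyα‖ ≤ ‖f + Δf - (A + ΔA) y‖ / (2 * √α) + α * ‖y‖ / (α + μ) :=
        hreg.norm_error_le hα hαμ (hμ Δyα)
    _ ≤ ‖A‖ * (‖Δf‖ / ‖f‖ + ‖ΔA‖ / ‖A‖) * ‖y‖ / (2 * √α) + α * ‖y‖ / (α + μ) := by
        gcongr
        exact norm_perturbed_residual_le hf hyf
    _ = _ := by ring

end Tikhonov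

/-- Relative error bound (6) of the paper for Tikhonov regularization in Euclidean spaces:
`‖Δyα‖/‖y‖ ≤ (‖A‖/(2√α))·η + α/(α + μ_min)` with `η = ‖Δf‖/‖f‖ + ‖ΔA‖/‖A‖` and
`μ_min` the smallest eigenvalue of `B̃ = Ã*Ã`. -/
theorem tikhonov_relative_error_bound_euclidean
    {n m : ℕ}
    (A ΔA Atilde : EuclideanSpace ℝ (Fin n) →L[ℝ] EuclideanSpace ℝ (Fin m))
    (hA0 : A ≠ 0) (hAt : Atilde = A + ΔA)
    (Btilde : EuclideanSpace ℝ (Fin n) →L[ℝ] EuclideanSpace ℝ (Fin n))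
    (hB : Btilde = (ContinuousLinearMap.adjoint Atilde).comp Atilde)
    (α : ℝ) (hα : 0 < α)
    (μmin : ℝ)
    (hμ : μmin = sInf {μ : ℝ |
      Module.End.HasEigenvalue
        (Btilde : EuclideanSpace ℝ (Fin n) →ₗ[ℝ] EuclideanSpace ℝ (Fin n)) μ})
    (y Δyα : EuclideanSpace ℝ (Fin n)) (f Δf : EuclideanSpace ℝ (Fin m))
    (hy0 : y ≠ 0) (hf0 : f ≠ 0) (hyf : A y = f)
    (hreg : (α • ContinuousLinearMap.id ℝ (EuclideanSpace ℝ (Fin n)) + Btilde) (y + Δyα)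
        = ContinuousLinearMap.adjoint Atilde (f + Δf)) :
    ‖Δyα‖ / ‖y‖ ≤
      ‖A‖ / (2 * Real.sqrt α) * (‖Δf‖ / ‖f‖ + ‖ΔA‖ / ‖A‖) + α / (α + μmin) := by
  subst hAt hB hμ
  exact tikhonov_relative_error_bound_euclidean_general hα
    (add_pos_of_pos_of_nonneg hα (sInf_eigenvalues_adjoint_comp_self_nonneg (A + ΔA)))
    (sInf_eigenvalues_adjoint_comp_self_mul_norm_sq_le (A + ΔA)) hf0 hyf
    (isTikhonovSolution_iff_normal_equation.mpr hreg)
end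

section
/- Let c > 0, η > 0, g > 0 and ε(α) = cη/(2√α) + α/(α + g) for α > 0. If cη/√g > 3√3/4, then ε′(α) < 0 for every α > 0; i.e., ε is strictly decreasing on (0, ∞) and has no interior minimum point. -/
open Set

/-!
The derivative is `ε′(α) = g / (α + g) ^ 2 - cη / (4 α ^ (3/2))`. AM-GM for the four
numbers `α/3, α/3, α/3, g` reads `256 α³ g ≤ 27 (α + g)⁴`, with equality at `α = 3 g`; its square
root bounds `4 α ^ (3/2) g / (α + g) ^ 2` by `(3√3/4) √g`, which is less than `cη`.
-/

lemma mul_pow_three_mul_le_mul_add_pow_four {R : Type*} [CommRing R] [LinearOrder R]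
    [IsStrictOrderedRing R] (a b : R) : 256 * a ^ 3 * b ≤ 27 * (a + b) ^ 4 := by
  have factorization : 27 * (a + b) ^ 4 - 256 * a ^ 3 * b =
      (a - 3 * b) ^ 2 * ((5 * a + b) ^ 2 + 2 * (a + b) ^ 2) := by ring
  exact sub_nonneg.mp (factorization ▸ by positivity)

lemma mul_sqrt_pow_three_mul_sqrt_le {a b : ℝ} (ha : 0 ≤ a) (hb : 0 ≤ b) :
    16 * √a ^ 3 * √b ≤ 3 * √3 * (a + b) ^ 2 := by
  refine le_of_sq_le_sq ?_ (by positivity)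
  calc (16 * √a ^ 3 * √b) ^ 2 = 256 * (√a ^ 2) ^ 3 * √b ^ 2 := by ring
    _ = 256 * a ^ 3 * b := by rw [Real.sq_sqrt ha, Real.sq_sqrt hb]
    _ ≤ 27 * (a + b) ^ 4 := mul_pow_three_mul_le_mul_add_pow_four a b
    _ = 9 * √3 ^ 2 * (a + b) ^ 4 := by rw [Real.sq_sqrt zero_le_three]; ring
    _ = (3 * √3 * (a + b) ^ 2) ^ 2 := by ring

lemma div_add_sq_le {a g : ℝ} (ha : 0 < a) (hg : 0 ≤ g) :
    g / (a + g) ^ 2 ≤ 3 * √3 / 4 * √g / (4 * √a ^ 3) := by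
  rw [div_le_div_iff₀ (by positivity) (by positivity)]
  calc g * (4 * √a ^ 3) = √g ^ 2 * (4 * √a ^ 3) := by rw [Real.sq_sqrt hg]
    _ = √g / 4 * (16 * √a ^ 3 * √g) := by ring
    _ ≤ √g / 4 * (3 * √3 * (a + g) ^ 2) :=
      mul_le_mul_of_nonneg_left (mul_sqrt_pow_three_mul_sqrt_le ha.le hg) (by positivity)
    _ = 3 * √3 / 4 * √g * (a + g) ^ 2 := by ring

/-- The error envelope `ε` at the regularization parameter `a`, with truncation parameter `g`.
The operator norm and the relative data error enter only through their product `k = cη`. -/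
noncomputable def errorEnvelope (k g a : ℝ) : ℝ := k / (2 * √a) + a / (a + g)

lemma hasDerivAt_errorEnvelope (k : ℝ) {g a : ℝ} (ha : 0 < a) (hag : a + g ≠ 0) :
    HasDerivAt (errorEnvelope k g) (g / (a + g) ^ 2 - k / (4 * √a ^ 3)) a := by
  have noise_deriv := (hasDerivAt_const a k).fun_div
    ((Real.hasDerivAt_sqrt ha.ne').const_mul 2) (by positivity)
  have bias_deriv := (hasDerivAt_id' a).fun_div ((hasDerivAt_id' a).add_const g) hag
  refine (noise_deriv.fun_add bias_deriv).congr_deriv ?_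
  have : √a ≠ 0 := (Real.sqrt_pos.mpr ha).ne'
  field_simp
  ring

section NoMinimum

variable {k g : ℝ}

lemma deriv_errorEnvelope_neg (hg : 0 < g) (hk : 3 * √3 / 4 < k / √g) {a : ℝ}
    (ha : 0 < a) : deriv (errorEnvelope k g) a < 0 := by
  rw [(hasDerivAt_errorEnvelope k ha (by positivity)).deriv, sub_neg]
  have hk' : 3 * √3 / 4 * √g < k := (lt_div_iff₀ (Real.sqrt_pos.mpr hg)).mp hk
  calc g / (a + g) ^ 2 ≤ 3 * √3 / 4 * √g / (4 * √a ^ 3) := div_add_sq_le ha hg.le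
    _ < k / (4 * √a ^ 3) := by gcongr

lemma strictAntiOn_errorEnvelope (hg : 0 < g) (hk : 3 * √3 / 4 < k / √g) :
    StrictAntiOn (errorEnvelope k g) (Ioi 0) := by
  refine strictAntiOn_of_deriv_neg (convex_Ioi 0) (fun a (ha : 0 < a) ↦ ?_) fun a ha ↦ ?_
  · exact (hasDerivAt_errorEnvelope k ha (by positivity)).continuousAt.continuousWithinAt
  · exact deriv_errorEnvelope_neg hg hk (interior_subset ha)

lemma not_isLocalMinOn_errorEnvelope (hg : 0 < g) (hk : 3 * √3 / 4 < k / √g) {a : ℝ}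
    (ha : 0 < a) : ¬ IsLocalMinOn (errorEnvelope k g) (Ioi 0) a := fun hmin ↦
  (deriv_errorEnvelope_neg hg hk ha).ne (hmin.isLocalMin (Ioi_mem_nhds ha)).deriv_eq_zero

end NoMinimum

/-- In the complementary case to condition (10), `cη/√g > 3√3/4`, the error envelope
`ε(α) = cη/(2√α) + α/(α + g)` has `ε′(α) < 0` for all `α > 0`: it is strictly decreasing
on `(0, ∞)` and has no interior (local) minimum point there. -/
theorem error_envelope_no_minimum
    (c η g : ℝ) (hc : 0 < c) (hη : 0 < η) (hg : 0 < g)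
    (hcond : 3 * Real.sqrt 3 / 4 < c * η / Real.sqrt g) :
    (∀ α : ℝ, 0 < α →
      deriv (fun a : ℝ => c * η / (2 * Real.sqrt a) + a / (a + g)) α < 0) ∧
    StrictAntiOn (fun a : ℝ => c * η / (2 * Real.sqrt a) + a / (a + g)) (Ioi 0) ∧
    (∀ α : ℝ, 0 < α →
      ¬ IsLocalMinOn (fun a : ℝ => c * η / (2 * Real.sqrt a) + a / (a + g)) (Ioi 0) α) := by
  exact ⟨fun _ ↦ deriv_errorEnvelope_neg hg hcond, strictAntiOn_errorEnvelope hg hcond,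
    fun _ ↦ not_isLocalMinOn_errorEnvelope hg hcond⟩
end
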